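/- If ζ is a primitive root of unity of order 8k, then as q approaches ζ radially within the unit disk, lim_{q→ζ} ( S₀(q²) − (q²;q²)_∞[(q;q²)_∞³ + (−q;q²)_∞³]/(2(−q²;q²)_∞) ) = −2 Σ_{n=0}^{k−1} [(1+ζ⁴)(1+ζ⁸)···(1+ζ^{4n})] / [(1+ζ²)(1+ζ⁶)···(1+ζ^{4n+2})] · ζ^{2n²+6n+4}. -/

import Mathlib

open scoped BigOperators
open Filter

/-- finite q-Pochhammer symbol (a;q)_n -/
noncomputable def qP (a q : ℂ) (n : ℕ) : ℂ := ∏ i ∈ Finset.range n, (1 - a * q ^ i)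

/-- q-Pochhammer symbol extended to integer index: (a;q)_{-n} = 1/(a q^{-n};q)_n -/
noncomputable def qPZ (a q : ℂ) : ℤ → ℂ
  | Int.ofNat n => qP a q n
  | Int.negSucc n => 1 / qP (a * q ^ (-(n + 1 : ℤ))) q (n + 1)

/-- infinite q-Pochhammer symbol (a;q)_∞ -/
noncomputable def qPInf (a q : ℂ) : ℂ := ∏' n : ℕ, (1 - a * q ^ n)

/-- the eighth order mock theta function S₀ -/
noncomputable def S0 (q : ℂ) : ℂ :=
  ∑' n : ℕ, q ^ (n ^ 2) * qP (-q) (q ^ 2) n / qP (-q ^ 2) (q ^ 2) n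

/- Multiplied by `(-p;p)_∞`, the series for `S₀(p)` is the nonnegative half of a bilateral series
whose negative half gives `2 T₀(p)`, with `T₀` the companion mock theta function. At `p = q²`, two
instances of Euler's series identify it with the part even in `q` of a triple series for
`(q²;q²)_∞ (-q;q²)_∞³`. So `S₀(q²) + 2 T₀(q²)` is the theta quotient in question, and the limit is
that of `-2 T₀(q²)`. At a primitive root of unity of order `4k` the series `T₀` terminates. As `p`
approaches it on the radii through the `4k`-th roots of unity, the ratio of two terms of `T₀(p)` at
distance `2k` comes uniformly close to numbers of modulus `Y(1 - Y)/(1 + Y) < 1/2` with `0 ≤ Y ≤ 1`.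
Hence the terms decay geometrically, uniformly in `p`, and the limit may be taken termwise. -/

open scoped Topology

section PochhammerSymbols

variable {a p : ℂ}

lemma norm_mul_pow_lt_one (ha : ‖a‖ < 1) (hp : ‖p‖ < 1) (n : ℕ) : ‖a * p ^ n‖ < 1 := by
  rw [norm_mul, norm_pow]
  exact mul_lt_one_of_nonneg_of_lt_one_left (norm_nonneg _) ha (pow_le_one₀ (norm_nonneg _) hp.le)

lemma norm_sq_lt_one (hp : ‖p‖ < 1) : ‖p ^ 2‖ < 1 := by
  rw [norm_pow]
  exact pow_lt_one₀ (norm_nonneg _) hp two_ne_zero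

lemma one_sub_mul_pow_ne_zero (ha : ‖a‖ < 1) (hp : ‖p‖ < 1) (n : ℕ) : 1 - a * p ^ n ≠ 0 :=
  (isUnit_one_sub_of_norm_lt_one (norm_mul_pow_lt_one ha hp n)).ne_zero

lemma qP_zero (a p : ℂ) : qP a p 0 = 1 :=
  Finset.prod_range_zero _

lemma qP_succ (a p : ℂ) (n : ℕ) : qP a p (n + 1) = qP a p n * (1 - a * p ^ n) :=
  Finset.prod_range_succ _ _

lemma qP_add (a p : ℂ) (m n : ℕ) : qP a p (m + n) = qP a p m * qP (a * p ^ m) p n := by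
  simp only [qP, Finset.prod_range_add, pow_add, mul_assoc]

lemma qP_ne_zero (ha : ‖a‖ < 1) (hp : ‖p‖ < 1) (n : ℕ) : qP a p n ≠ 0 :=
  Finset.prod_ne_zero_iff.2 fun i _ ↦ one_sub_mul_pow_ne_zero ha hp i

lemma continuous_qP (n : ℕ) : Continuous fun x : ℂ × ℂ ↦ qP x.1 x.2 n := by
  unfold qP
  fun_prop

lemma qP_eq_one_sub_pow {η : ℂ} {N : ℕ} (hN : 0 < N) (hη : IsPrimitiveRoot η N) (a : ℂ) :
    qP a η N = 1 - a ^ N := by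
  have h := congrArg (Polynomial.eval 1) (X_pow_sub_C_eq_prod hη hN (rfl : a ^ N = a ^ N))
  simp only [Polynomial.eval_prod, Polynomial.eval_sub, Polynomial.eval_pow, Polynomial.eval_X,
    Polynomial.eval_C, one_pow] at h
  simp only [h, qP, mul_comm a]

lemma summable_norm_neg_mul_pow (a : ℂ) (hp : ‖p‖ < 1) : Summable fun n : ℕ ↦ ‖-(a * p ^ n)‖ :=
  ((summable_geometric_of_norm_lt_one hp).mul_left a).neg.norm

lemma multipliable_one_sub_mul_pow (a : ℂ) (hp : ‖p‖ < 1) :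
    Multipliable fun n : ℕ ↦ 1 - a * p ^ n := by
  simpa only [sub_eq_add_neg] using
    multipliable_one_add_of_summable (summable_norm_neg_mul_pow a hp)

lemma tendsto_qP (a : ℂ) (hp : ‖p‖ < 1) : Tendsto (qP a p) atTop (𝓝 (qPInf a p)) :=
  (multipliable_one_sub_mul_pow a hp).hasProd.tendsto_prod_nat

lemma qPInf_ne_zero (ha : ‖a‖ < 1) (hp : ‖p‖ < 1) : qPInf a p ≠ 0 := by
  simpa only [qPInf, sub_eq_add_neg] using tprod_one_add_ne_zero_of_summable
    (fun i ↦ by simpa only [sub_eq_add_neg] using one_sub_mul_pow_ne_zero ha hp i)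
    (summable_norm_neg_mul_pow a hp)

lemma qPInf_eq_qP_mul (a : ℂ) (hp : ‖p‖ < 1) (n : ℕ) :
    qPInf a p = qP a p n * qPInf (a * p ^ n) p := by
  have hshift : (fun i : ℕ ↦ 1 - a * p ^ (i + n)) = fun i ↦ 1 - a * p ^ n * p ^ i := by
    ext i
    ring
  have h := Multipliable.prod_mul_tprod_nat_mul' (f := fun i ↦ 1 - a * p ^ i) (k := n)
    (hshift ▸ multipliable_one_sub_mul_pow _ hp)
  rw [qPInf, ← h, hshift, qP, qPInf]

lemma qPInf_eq_one_sub_mul (a : ℂ) (hp : ‖p‖ < 1) : qPInf a p = (1 - a) * qPInf (a * p) p := by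
  simpa [qP] using qPInf_eq_qP_mul a hp 1

lemma qPInf_zero_left (p : ℂ) : qPInf 0 p = 1 := by
  simp only [qPInf, zero_mul, sub_zero, tprod_one]

lemma qPInf_one_left (hp : ‖p‖ < 1) : qPInf 1 p = 0 := by
  rw [qPInf_eq_one_sub_mul 1 hp, sub_self, zero_mul]

lemma qPInf_zpow_neg_natCast (hp0 : p ≠ 0) (hp : ‖p‖ < 1) (n : ℕ) :
    qPInf (p ^ (-n : ℤ)) p = 0 := by
  rw [qPInf_eq_qP_mul _ hp n, zpow_neg, zpow_natCast, inv_mul_cancel₀ (pow_ne_zero n hp0),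
    qPInf_one_left hp, mul_zero]

lemma qPInf_sq_mul_qPInf_mul_sq (a : ℂ) (hp : ‖p‖ < 1) :
    qPInf a (p ^ 2) * qPInf (a * p) (p ^ 2) = qPInf a p := by
  have heven : (fun n : ℕ ↦ 1 - a * p ^ (2 * n)) = fun n ↦ 1 - a * (p ^ 2) ^ n := by
    simp only [pow_mul]
  have hodd : (fun n : ℕ ↦ 1 - a * p ^ (2 * n + 1)) = fun n ↦ 1 - a * p * (p ^ 2) ^ n := by
    simp only [pow_succ', pow_mul, mul_assoc, pow_zero, mul_one]
  have h := tprod_even_mul_odd (f := fun n : ℕ ↦ 1 - a * p ^ n)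
    (heven ▸ multipliable_one_sub_mul_pow a (norm_sq_lt_one hp))
    (hodd ▸ multipliable_one_sub_mul_pow _ (norm_sq_lt_one hp))
  rwa [heven, hodd] at h

/-- Each of the `n` factors `1 + x * q ^ (1 - 2 * i)`, `1 ≤ i ≤ n`, is reflected to
`x * q ^ (1 - 2 * i) * (1 + x⁻¹ * q ^ (2 * i - 1))`. -/
lemma qPInf_neg_mul_zpow_mul_pow_sq {q x : ℂ} (hq0 : q ≠ 0) (hq : ‖q‖ < 1) (hx : x ≠ 0) (n : ℕ) :
    qPInf (-(x * q ^ (1 - 2 * n : ℤ))) (q ^ 2) * q ^ n ^ 2 =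
      x ^ n * qP (-(x⁻¹ * q)) (q ^ 2) n * qPInf (-(x * q)) (q ^ 2) := by
  induction n with
  | zero => simp [qP_zero]
  | succ n ih =>
    have hstep : q ^ (1 - 2 * (n + 1 : ℕ) : ℤ) * q ^ 2 = q ^ (1 - 2 * n : ℤ) := by
      rw [← zpow_natCast q 2, ← zpow_add₀ hq0]
      congr 1
      push_cast
      ring
    have hinv : q ^ (1 - 2 * (n + 1 : ℕ) : ℤ) * q ^ (2 * n + 1) = 1 := by
      rw [← zpow_natCast q (2 * n + 1), ← zpow_add₀ hq0, ← zpow_zero q]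
      congr 1
      push_cast
      ring
    rw [qPInf_eq_one_sub_mul _ (norm_sq_lt_one hq), neg_mul, mul_assoc x, hstep, qP_succ]
    linear_combination (x + q * (q ^ 2) ^ n) * ih +
      x * qPInf (-(x * q ^ (1 - 2 * n : ℤ))) (q ^ 2) * q ^ n ^ 2 * hinv +
      -q * (q ^ 2) ^ n * x ^ n * qP (-(x⁻¹ * q)) (q ^ 2) n * qPInf (-(x * q)) (q ^ 2) *
        mul_inv_cancel₀ hx

end PochhammerSymbols

section QBinomialTheorem

variable {a b p x : ℂ}

lemma tendsto_tsum_mul_pow_nhds_zero {c : ℕ → ℂ} (hc : Summable c) :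
    Tendsto (fun x : ℂ ↦ ∑' j, c j * x ^ j) (𝓝 0) (𝓝 (c 0)) := by
  have hterm (j : ℕ) : Tendsto (fun x : ℂ ↦ c j * x ^ j) (𝓝 0) (𝓝 (c j * 0 ^ j)) :=
    Continuous.tendsto (by fun_prop) 0
  have hbound : ∀ᶠ x : ℂ in 𝓝 0, ∀ j, ‖c j * x ^ j‖ ≤ ‖c j‖ := by
    filter_upwards [Metric.ball_mem_nhds (0 : ℂ) one_pos] with x hx j
    rw [norm_mul, norm_pow]
    exact mul_le_of_le_one_right (norm_nonneg _)
      (pow_le_one₀ (norm_nonneg _) (mem_ball_zero_iff.1 hx).le)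
  have hlim := tendsto_tsum_of_dominated_convergence hc.norm hterm hbound
  rwa [tsum_eq_single 0 fun j hj ↦ by rw [zero_pow hj, mul_zero], pow_zero, mul_one] at hlim

/-- The coefficients of the homogeneous `q`-binomial series
`∑ (b - a)(b - ap)⋯(b - apⁿ⁻¹) / (p;p)ₙ`; keeping both `a` and `b` makes each of Euler's two
series a specialisation, with no limit to be taken. -/
noncomputable def qBinomialCoeff (a b p : ℂ) (n : ℕ) : ℂ :=
  (∏ i ∈ Finset.range n, (b - a * p ^ i)) / qP p p n

lemma qBinomialCoeff_zero (a b p : ℂ) : qBinomialCoeff a b p 0 = 1 := by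
  simp [qBinomialCoeff, qP_zero]

lemma qBinomialCoeff_succ_mul (a b : ℂ) (hp : ‖p‖ < 1) (n : ℕ) :
    qBinomialCoeff a b p (n + 1) * (1 - p ^ (n + 1)) =
      (b - a * p ^ n) * qBinomialCoeff a b p n := by
  rw [qBinomialCoeff, qBinomialCoeff, Finset.prod_range_succ, qP_succ, pow_succ',
    ← div_div, div_mul_cancel₀ _ (one_sub_mul_pow_ne_zero hp hp n)]
  ring

lemma qBinomialCoeff_mul_mul (a b p x : ℂ) (n : ℕ) :
    qBinomialCoeff (a * x) (b * x) p n = qBinomialCoeff a b p n * x ^ n := by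
  have h (i : ℕ) : b * x - a * x * p ^ i = (b - a * p ^ i) * x := by ring
  simp only [qBinomialCoeff, h, Finset.prod_mul_distrib, Finset.prod_const, Finset.card_range]
  ring

lemma summable_qBinomialCoeff (a : ℂ) (hp : ‖p‖ < 1) (hb : ‖b‖ < 1) :
    Summable (qBinomialCoeff a b p) := by
  have hratio : Tendsto (fun n : ℕ ↦ ‖(b - a * p ^ n) / (1 - p * p ^ n)‖) atTop (𝓝 ‖b‖) := by
    have hpow := tendsto_pow_atTop_nhds_zero_of_norm_lt_one hp
    simpa using (((hpow.const_mul a).const_sub b).div ((hpow.const_mul p).const_sub 1)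
      (by simp)).norm
  obtain ⟨r, hbr, hr⟩ := exists_between hb
  refine summable_of_ratio_norm_eventually_le hr ?_
  filter_upwards [hratio.eventually_le_const hbr] with n hn
  have hsucc : qBinomialCoeff a b p (n + 1) =
      (b - a * p ^ n) / (1 - p * p ^ n) * qBinomialCoeff a b p n := by
    rw [div_mul_eq_mul_div, eq_div_iff (one_sub_mul_pow_ne_zero hp hp n), ← pow_succ',
      qBinomialCoeff_succ_mul a b hp]
  rw [hsucc, norm_mul]
  gcongr

lemma one_sub_mul_tsum_qBinomialCoeff (a : ℂ) (hp : ‖p‖ < 1) (hb : ‖b‖ < 1) :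
    (1 - b) * ∑' n, qBinomialCoeff a b p n =
      (1 - a) * ∑' n, qBinomialCoeff (a * p) (b * p) p n := by
  have hs := summable_qBinomialCoeff a hp hb
  have hsp : Summable (qBinomialCoeff (a * p) (b * p) p) :=
    summable_qBinomialCoeff _ hp (by simpa using norm_mul_pow_lt_one hb hp 1)
  have hdiff : ∑' n, qBinomialCoeff a b p n - ∑' n, qBinomialCoeff (a * p) (b * p) p n =
      b * ∑' n, qBinomialCoeff a b p n - a * ∑' n, qBinomialCoeff (a * p) (b * p) p n := by
    rw [← hs.tsum_sub hsp, (hs.sub hsp).tsum_eq_zero_add, ← tsum_mul_left, ← tsum_mul_left,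
      ← (hs.mul_left b).tsum_sub (hsp.mul_left a), qBinomialCoeff_zero, qBinomialCoeff_zero,
      sub_self, zero_add]
    refine tsum_congr fun n ↦ ?_
    simp only [qBinomialCoeff_mul_mul]
    linear_combination qBinomialCoeff_succ_mul a b hp n
  linear_combination hdiff

lemma qP_mul_tsum_qBinomialCoeff (a : ℂ) (hp : ‖p‖ < 1) (hb : ‖b‖ < 1) (n : ℕ) :
    qP b p n * ∑' j, qBinomialCoeff a b p j =
      qP a p n * ∑' j, qBinomialCoeff (a * p ^ n) (b * p ^ n) p j := by
  induction n with
  | zero => simp [qP_zero]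
  | succ n ih =>
    have hstep := one_sub_mul_tsum_qBinomialCoeff (a * p ^ n) hp (norm_mul_pow_lt_one hb hp n)
    rw [qP_succ, qP_succ, pow_succ, ← mul_assoc, ← mul_assoc]
    linear_combination (1 - b * p ^ n) * ih + qP a p n * hstep

lemma hasSum_qBinomialCoeff (a : ℂ) (hp : ‖p‖ < 1) (hb : ‖b‖ < 1) :
    HasSum (qBinomialCoeff a b p) (qPInf a p / qPInf b p) := by
  have hs := summable_qBinomialCoeff a hp hb
  have hpow : Tendsto (fun n ↦ ∑' j, qBinomialCoeff (a * p ^ n) (b * p ^ n) p j) atTop (𝓝 1) := by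
    simpa only [Function.comp_def, qBinomialCoeff_mul_mul, qBinomialCoeff_zero] using
      (tendsto_tsum_mul_pow_nhds_zero hs).comp (tendsto_pow_atTop_nhds_zero_of_norm_lt_one hp)
  have hlim : qPInf b p * ∑' j, qBinomialCoeff a b p j = qPInf a p * 1 :=
    tendsto_nhds_unique ((tendsto_qP b hp).mul_const _) <| by
      simpa only [qP_mul_tsum_qBinomialCoeff a hp hb] using (tendsto_qP a hp).mul hpow
  rw [mul_one] at hlim
  rw [← hlim, mul_div_cancel_left₀ _ (qPInf_ne_zero hb hp)]
  exact hs.hasSum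

lemma hasSum_pow_div_qP (hp : ‖p‖ < 1) (hx : ‖x‖ < 1) :
    HasSum (fun n : ℕ ↦ x ^ n / qP p p n) (qPInf x p)⁻¹ := by
  have hcoeff : qBinomialCoeff 0 x p = fun n : ℕ ↦ x ^ n / qP p p n := by
    ext n
    simp [qBinomialCoeff]
  have hsum := hasSum_qBinomialCoeff 0 hp hx
  rwa [hcoeff, qPInf_zero_left, one_div] at hsum

lemma hasSum_pow_sq_mul_pow_div_qP {q : ℂ} (hq : ‖q‖ < 1) (x : ℂ) :
    HasSum (fun n : ℕ ↦ q ^ n ^ 2 * x ^ n / qP (q ^ 2) (q ^ 2) n) (qPInf (-(x * q)) (q ^ 2)) := by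
  have hprod (n : ℕ) : ∏ i ∈ Finset.range n, (x * q * (q ^ 2) ^ i) = q ^ n ^ 2 * x ^ n := by
    induction n with
    | zero => simp
    | succ n ih =>
      rw [Finset.prod_range_succ, ih]
      ring
  have hcoeff : qBinomialCoeff (-(x * q)) 0 (q ^ 2) =
      fun n : ℕ ↦ q ^ n ^ 2 * x ^ n / qP (q ^ 2) (q ^ 2) n := by
    ext n
    simp only [qBinomialCoeff, neg_mul, sub_neg_eq_add, zero_add, hprod]
  have hsum := hasSum_qBinomialCoeff (-(x * q)) (norm_sq_lt_one hq) (b := 0) (by simp)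
  rwa [hcoeff, qPInf_zero_left, div_one] at hsum

end QBinomialTheorem

lemma hasSum_mul_prod {α β : Type*} {f : α → ℂ} {g : β → ℂ} {a b : ℂ} (hf : HasSum f a)
    (hg : HasSum g b) : HasSum (fun x : α × β ↦ f x.1 * g x.2) (a * b) :=
  hf.mul hg (summable_mul_of_summable_norm hf.summable.norm hg.summable.norm)

section JacobiTripleProduct

variable {q x : ℂ}

lemma summable_pow_sq_mul_pow (hq : ‖q‖ < 1) (x : ℂ) : Summable fun n : ℕ ↦ q ^ n ^ 2 * x ^ n := by
  have hratio : Tendsto (fun n : ℕ ↦ ‖(q ^ 2) ^ n * (q * x)‖) atTop (𝓝 0) := by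
    simpa using ((tendsto_pow_atTop_nhds_zero_of_norm_lt_one (norm_sq_lt_one hq)).mul_const
      (q * x)).norm
  refine summable_of_ratio_norm_eventually_le one_half_lt_one ?_
  filter_upwards [hratio.eventually_le_const one_half_pos] with n hn
  have hsucc : q ^ (n + 1) ^ 2 * x ^ (n + 1) = (q ^ 2) ^ n * (q * x) * (q ^ n ^ 2 * x ^ n) := by
    ring
  rw [hsucc, norm_mul]
  gcongr

lemma summable_zpow_sq_mul_zpow (hq : ‖q‖ < 1) (x : ℂ) :
    Summable fun m : ℤ ↦ q ^ m ^ 2 * x ^ m := by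
  refine Summable.of_nat_of_neg ?_ ?_
  · exact_mod_cast summable_pow_sq_mul_pow hq x
  · simp only [neg_sq, zpow_neg, ← inv_zpow]
    exact_mod_cast summable_pow_sq_mul_pow hq x⁻¹

lemma hasSum_shifted_zpow_sq_mul_zpow (hq0 : q ≠ 0) (hq : ‖q‖ < 1) (hx : x ≠ 0) (n : ℤ) :
    HasSum (fun k : ℕ ↦ (-(x⁻¹ * q)) ^ k / qP (q ^ 2) (q ^ 2) k *
        (q ^ (n + k) ^ 2 * x ^ (n + k)))
      (q ^ n ^ 2 * x ^ n * qPInf ((q ^ 2) ^ (n + 1)) (q ^ 2)) := by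
  have harg : -(-q ^ (2 * n + 1) * q) = (q ^ 2) ^ (n + 1) := by
    rw [neg_mul, neg_neg, ← zpow_add_one₀ hq0, ← zpow_natCast q 2, ← zpow_mul]
    congr 1
    push_cast
    ring
  have hsum := (hasSum_pow_sq_mul_pow_div_qP hq (-q ^ (2 * n + 1))).mul_left (q ^ n ^ 2 * x ^ n)
  rw [harg] at hsum
  refine hsum.congr_fun fun k ↦ ?_
  have hexp : q ^ (n + k) ^ 2 = q ^ n ^ 2 * ((q ^ (2 * n)) ^ k * q ^ k ^ 2) := by
    simp only [← zpow_natCast, ← zpow_mul, ← zpow_add₀ hq0]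
    congr 1
    push_cast
    ring
  have hxk : x⁻¹ ^ k * x ^ (n + k) = x ^ n := by
    rw [zpow_add₀ hx, zpow_natCast, inv_pow, mul_left_comm, inv_mul_cancel₀ (pow_ne_zero k hx),
      mul_one]
  rw [zpow_add_one₀ hq0, neg_pow (x⁻¹ * q), mul_pow, neg_pow (_ * q), mul_pow, hexp, ← hxk]
  ring

lemma hasSum_zpow_sq_mul_zpow_mul_qPInf (hq0 : q ≠ 0) (hq : ‖q‖ < 1) (x : ℂ) :
    HasSum (fun n : ℤ ↦ q ^ n ^ 2 * x ^ n * qPInf ((q ^ 2) ^ (n + 1)) (q ^ 2))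
      (qPInf (q ^ 2) (q ^ 2) * qPInf (-(x * q)) (q ^ 2)) := by
  have hp := norm_sq_lt_one hq
  have hnonneg (n : ℕ) : q ^ (n : ℤ) ^ 2 * x ^ (n : ℤ) * qPInf ((q ^ 2) ^ ((n : ℤ) + 1)) (q ^ 2) =
      qPInf (q ^ 2) (q ^ 2) * (q ^ n ^ 2 * x ^ n / qP (q ^ 2) (q ^ 2) n) := by
    rw [qPInf_eq_qP_mul (q ^ 2) hp n, ← pow_succ']
    have := qP_ne_zero hp hp n
    norm_cast
    field_simp
  have hneg (n : ℕ) : q ^ (-((n : ℤ) + 1)) ^ 2 * x ^ (-((n : ℤ) + 1)) *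
      qPInf ((q ^ 2) ^ (-((n : ℤ) + 1) + 1)) (q ^ 2) = 0 := by
    rw [neg_add_rev, neg_add_cancel_comm, qPInf_zpow_neg_natCast (pow_ne_zero 2 hq0) hp, mul_zero]
  rw [← add_zero (_ * _)]
  refine HasSum.of_nat_of_neg_add_one ?_ ?_
  · simpa only [hnonneg] using (hasSum_pow_sq_mul_pow_div_qP hq x).mul_left _
  · simpa only [hneg] using hasSum_zero

/-- Expanding `1 / (-q/x;q²)_∞` and regrouping the product with the theta series by the exponent of
`x` leaves a bilateral series whose negative terms vanish, which is Euler's series for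
`(-xq;q²)_∞`. -/
lemma hasSum_jacobi_triple_of_norm_lt_one (hq0 : q ≠ 0) (hq : ‖q‖ < 1) (hx : x ≠ 0)
    (hxq : ‖x⁻¹ * q‖ < 1) :
    HasSum (fun m : ℤ ↦ q ^ m ^ 2 * x ^ m)
      (qPInf (q ^ 2) (q ^ 2) * qPInf (-(x * q)) (q ^ 2) * qPInf (-(x⁻¹ * q)) (q ^ 2)) := by
  have hp := norm_sq_lt_one hq
  rw [← norm_neg] at hxq
  have htheta := (summable_zpow_sq_mul_zpow hq x).hasSum
  have hprod := hasSum_mul_prod (hasSum_pow_div_qP hp hxq) htheta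
  let shear : ℤ × ℕ ≃ ℕ × ℤ :=
    (Equiv.prodComm ℤ ℕ).trans (Equiv.prodShear (Equiv.refl ℕ) fun k ↦ Equiv.addRight (k : ℤ))
  have hfib := (shear.hasSum_iff.2 hprod).prod_fiberwise
    (hasSum_shifted_zpow_sq_mul_zpow hq0 hq hx)
  have huniq := hfib.unique (hasSum_zpow_sq_mul_zpow_mul_qPInf hq0 hq x)
  rw [← huniq, mul_right_comm, inv_mul_cancel₀ (qPInf_ne_zero hxq hp), one_mul]
  exact htheta

lemma hasSum_jacobi_triple (hq0 : q ≠ 0) (hq : ‖q‖ < 1) (hx : x ≠ 0) :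
    HasSum (fun m : ℤ ↦ q ^ m ^ 2 * x ^ m)
      (qPInf (q ^ 2) (q ^ 2) * qPInf (-(x * q)) (q ^ 2) * qPInf (-(x⁻¹ * q)) (q ^ 2)) := by
  rcases lt_or_ge ‖x⁻¹ * q‖ 1 with hxq | hxq
  · exact hasSum_jacobi_triple_of_norm_lt_one hq0 hq hx hxq
  · have hprod : x * q * (x⁻¹ * q) = q ^ 2 := by
      field_simp
    have hxq' : ‖x⁻¹⁻¹ * q‖ < 1 := by
      rw [inv_inv]
      refine (le_mul_of_one_le_right (norm_nonneg _) hxq).trans_lt ?_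
      rw [← norm_mul, hprod]
      exact norm_sq_lt_one hq
    have h := (Equiv.neg ℤ).hasSum_iff.2
      (hasSum_jacobi_triple_of_norm_lt_one hq0 hq (inv_ne_zero hx) hxq')
    simpa only [Function.comp_def, Equiv.neg_apply, neg_sq, inv_zpow', neg_neg, inv_inv,
      mul_right_comm] using h

end JacobiTripleProduct

section EulerSeries

open PowerSeries

variable {p : ℂ}

/-- The formal power series `∑ Xⁿ / (p;p)ₙ`, which is Euler's expansion of `1 / (X;p)_∞`. -/
noncomputable def eulerSeries (p : ℂ) : PowerSeries ℂ := PowerSeries.mk fun n ↦ (qP p p n)⁻¹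

lemma eulerSeries_sub_rescale (hp : ‖p‖ < 1) :
    eulerSeries p - rescale p (eulerSeries p) = X * eulerSeries p := by
  ext n
  cases n with
  | zero => rw [map_sub, coeff_rescale, coeff_zero_X_mul, pow_zero, one_mul, sub_self]
  | succ n =>
    have hn := qP_ne_zero hp hp n
    have hn' := one_sub_mul_pow_ne_zero hp hp n
    simp only [eulerSeries, map_sub, coeff_rescale, coeff_succ_X_mul, coeff_mk, qP_succ]
    field_simp
    ring

lemma coeff_mul_qP_of_sub_rescale {F : PowerSeries ℂ} (hF : F - rescale p F = X * F) (n : ℕ) :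
    coeff n F * qP p p n = coeff 0 F := by
  induction n with
  | zero => rw [qP_zero, mul_one]
  | succ n ih =>
    have hcoeff := congrArg (coeff (n + 1)) hF
    rw [map_sub, coeff_rescale, coeff_succ_X_mul] at hcoeff
    rw [qP_succ, ← ih]
    linear_combination qP p p n * hcoeff

/-- Both sides are coefficients of Euler's series for `1 / (X;p)_∞ = 1 / ((pX;p²)_∞ (X;p²)_∞)`. -/
lemma sum_antidiagonal_pow_div_qP_sq (hp : ‖p‖ < 1) (N : ℕ) :
    ∑ x ∈ Finset.HasAntidiagonal.antidiagonal N,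
      p ^ x.1 / (qP (p ^ 2) (p ^ 2) x.1 * qP (p ^ 2) (p ^ 2) x.2) = (qP p p N)⁻¹ := by
  set A := eulerSeries (p ^ 2)
  have hG : rescale p A * A - rescale p (rescale p A * A) = X * (rescale p A * A) := by
    rw [map_mul, rescale_rescale, ← sq]
    linear_combination rescale p A * eulerSeries_sub_rescale (norm_sq_lt_one hp)
  have hzero : coeff 0 (rescale p A * A) = 1 := by
    simp [A, eulerSeries, qP_zero, coeff_mul, coeff_rescale, -coeff_zero_eq_constantCoeff]
  rw [← one_div, eq_div_iff (qP_ne_zero hp hp N), ← hzero, ← coeff_mul_qP_of_sub_rescale hG N,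
    coeff_mul]
  congr 1
  refine Finset.sum_congr rfl fun x _ ↦ ?_
  simp only [A, eulerSeries, coeff_rescale, coeff_mk]
  field_simp

end EulerSeries

section ThetaCube

variable {q : ℂ}

/-- The general term of the double series for `(-q;q²)_∞` that arises from Euler's series
`∑ q^(N²) / (q²;q²)_N` when `1 / (q²;q²)_N` is split as in `sum_antidiagonal_pow_div_qP_sq`. -/
noncomputable def eulerDoubleTerm (q : ℂ) (x : ℕ × ℕ) : ℂ :=
  q ^ ((x.1 + x.2) ^ 2 + 2 * x.1) /
    (qP ((q ^ 2) ^ 2) ((q ^ 2) ^ 2) x.1 * qP ((q ^ 2) ^ 2) ((q ^ 2) ^ 2) x.2)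

lemma summable_eulerDoubleTerm (hq : ‖q‖ < 1) : Summable (eulerDoubleTerm q) := by
  have hs := hasSum_pow_div_qP (norm_sq_lt_one (norm_sq_lt_one hq)) hq
  refine (hasSum_mul_prod hs hs).summable.norm.of_norm_bounded fun x ↦ ?_
  rw [eulerDoubleTerm, div_mul_div_comm, ← pow_add, norm_div, norm_div, norm_pow, norm_pow]
  gcongr ?_ / _
  exact pow_le_pow_of_le_one (norm_nonneg q) hq.le
    ((Nat.le_self_pow two_ne_zero _).trans (Nat.le_add_right _ _))

lemma hasSum_eulerDoubleTerm (hq : ‖q‖ < 1) :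
    HasSum (eulerDoubleTerm q) (qPInf (-q) (q ^ 2)) := by
  have hs := (summable_eulerDoubleTerm hq).hasSum
  have heuler : HasSum (fun N : ℕ ↦ q ^ N ^ 2 * (qP (q ^ 2) (q ^ 2) N)⁻¹) (qPInf (-q) (q ^ 2)) := by
    simpa only [one_pow, one_mul, mul_one, div_eq_mul_inv] using hasSum_pow_sq_mul_pow_div_qP hq 1
  have hdiag := (Finset.HasAntidiagonal.sigmaAntidiagonalEquivProd.hasSum_iff.2 hs).sigma
    (g := fun N ↦ q ^ N ^ 2 * (qP (q ^ 2) (q ^ 2) N)⁻¹) fun N ↦ ?_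
  · rwa [hdiag.unique heuler] at hs
  · rw [← sum_antidiagonal_pow_div_qP_sq (norm_sq_lt_one hq) N, Finset.mul_sum]
    refine (Finset.hasSum _ _).congr_fun fun x ↦ ?_
    simp only [Function.comp, eulerDoubleTerm,
      Finset.HasAntidiagonal.sigmaAntidiagonalEquivProd_apply,
      Finset.HasAntidiagonal.mem_antidiagonal.1 x.2, pow_add, pow_mul]
    ring

/-- The general term, indexed by `(m, j, k)`, of the triple series for
`(q²;q²)_∞ (-q;q²)_∞³`: the theta series contributes two of the factors `(-q;q²)_∞` and the double
Euler series the third. -/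
noncomputable def thetaCubeTerm (q : ℂ) (y : ℤ × ℕ × ℕ) : ℂ :=
  q ^ y.1 ^ 2 * eulerDoubleTerm q y.2

lemma hasSum_thetaCubeTerm (hq0 : q ≠ 0) (hq : ‖q‖ < 1) :
    HasSum (thetaCubeTerm q) (qPInf (q ^ 2) (q ^ 2) * qPInf (-q) (q ^ 2) ^ 3) := by
  have htheta := hasSum_jacobi_triple hq0 hq one_ne_zero
  simp only [one_zpow, inv_one, one_mul, mul_one] at htheta
  have hprod := hasSum_mul_prod htheta (hasSum_eulerDoubleTerm hq)
  rwa [mul_assoc (qPInf (q ^ 2) (q ^ 2)), ← sq, mul_assoc, ← pow_succ] at hprod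

lemma neg_one_zpow_sq (m : ℤ) : (-1 : ℂ) ^ m ^ 2 = (-1) ^ m := by
  rcases m.even_or_odd with hm | hm
  · rw [hm.neg_one_zpow, (hm.pow_of_ne_zero two_ne_zero).neg_one_zpow]
  · rw [hm.neg_one_zpow, hm.pow.neg_one_zpow]

lemma thetaCubeTerm_neg (q : ℂ) (y : ℤ × ℕ × ℕ) :
    thetaCubeTerm (-q) y = (-1) ^ (y.1 + y.2.1 + y.2.2) * thetaCubeTerm q y := by
  obtain ⟨m, j, k⟩ := y
  have hm : (-q) ^ m ^ 2 = (-1) ^ m * q ^ m ^ 2 := by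
    rw [← neg_one_mul, mul_zpow, neg_one_zpow_sq]
  have hjk : (-q) ^ ((j + k) ^ 2 + 2 * j) =
      (-1) ^ (j + k : ℤ) * q ^ ((j + k) ^ 2 + 2 * j) := by
    rw [← neg_one_mul, mul_pow, pow_add (-1 : ℂ), pow_mul, neg_one_sq, one_pow, mul_one,
      ← neg_one_zpow_sq]
    norm_cast
  simp only [thetaCubeTerm, eulerDoubleTerm, neg_sq, hm, hjk, add_assoc]
  rw [zpow_add₀ (neg_ne_zero.2 one_ne_zero) m]
  ring

/-- The sign in `thetaCubeTerm_neg` singles out the indices with `m ≡ j - k` modulo `2`, that is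
`m = 2 * n + j - k`. -/
lemma hasSum_thetaCubeTerm_even (hq0 : q ≠ 0) (hq : ‖q‖ < 1) :
    HasSum (fun x : ℤ × ℕ × ℕ ↦ thetaCubeTerm q (2 * x.1 + x.2.1 - x.2.2, x.2))
      (qPInf (q ^ 2) (q ^ 2) * ((qPInf q (q ^ 2) ^ 3 + qPInf (-q) (q ^ 2) ^ 3) / 2)) := by
  have hneg := hasSum_thetaCubeTerm (neg_ne_zero.2 hq0) ((norm_neg q).trans_lt hq)
  rw [neg_sq, neg_neg] at hneg
  have hsum := (hneg.add (hasSum_thetaCubeTerm hq0 hq)).div_const 2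
  simp only [← mul_add, mul_div_assoc, thetaCubeTerm_neg] at hsum
  set ι : ℤ × ℕ × ℕ → ℤ × ℕ × ℕ := fun x ↦ (2 * x.1 + x.2.1 - x.2.2, x.2)
  have hι_inj : Function.Injective ι := by
    rintro ⟨n, j, k⟩ ⟨n', j', k'⟩ h
    simp only [ι, Prod.mk.injEq] at h ⊢
    omega
  refine ((hι_inj.hasSum_iff ?_).2 hsum).congr_fun fun x ↦ ?_
  · rintro ⟨m, j, k⟩ hrange
    have hodd : Odd (m + j + k) := by
      refine Int.not_even_iff_odd.1 fun ⟨a, ha⟩ ↦ hrange ⟨(a - j, j, k), ?_⟩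
      simp only [ι, Prod.mk.injEq, and_true]
      omega
    rw [hodd.neg_one_zpow]
    ring
  · have heven : Even (2 * x.1 + x.2.1 - x.2.2 + x.2.1 + x.2.2) := ⟨x.1 + x.2.1, by ring⟩
    simp only [Function.comp, ι, heven.neg_one_zpow]
    ring

end ThetaCube

section BilateralSeries

variable {p q : ℂ}

/-- `(-p;p)_∞` times the general term of `S₀(p)`, written so as to make sense for all integers. -/
noncomputable def bilateralTerm (p : ℂ) (n : ℤ) : ℂ :=
  p ^ (2 * n ^ 2) * (qPInf (-p ^ (2 * n + 2)) (p ^ 2) * qPInf (-p ^ (1 - 2 * n)) (p ^ 2))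

lemma thetaCubeTerm_shift (hq0 : q ≠ 0) (n : ℤ) (j k : ℕ) :
    thetaCubeTerm q (2 * n + j - k, j, k) = (q ^ 2) ^ (2 * n ^ 2) *
      ((q ^ 2) ^ j ^ 2 * ((q ^ 2) ^ (2 * n + 1)) ^ j / qP ((q ^ 2) ^ 2) ((q ^ 2) ^ 2) j *
        ((q ^ 2) ^ k ^ 2 * ((q ^ 2) ^ (-2 * n)) ^ k / qP ((q ^ 2) ^ 2) ((q ^ 2) ^ 2) k)) := by
  have hexp : q ^ (2 * n + j - k) ^ 2 * q ^ ((j + k) ^ 2 + 2 * j) = (q ^ 2) ^ (2 * n ^ 2) *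
      (((q ^ 2) ^ j ^ 2 * ((q ^ 2) ^ (2 * n + 1)) ^ j) *
        ((q ^ 2) ^ k ^ 2 * ((q ^ 2) ^ (-2 * n)) ^ k)) := by
    simp only [← zpow_natCast, ← zpow_mul, ← zpow_add₀ hq0]
    congr 1
    push_cast
    ring
  rw [thetaCubeTerm, eulerDoubleTerm, ← mul_div_assoc, hexp, div_mul_div_comm, mul_div_assoc]

lemma hasSum_bilateralTerm (hq0 : q ≠ 0) (hq : ‖q‖ < 1) :
    HasSum (bilateralTerm (q ^ 2))
      (qPInf (q ^ 2) (q ^ 2) * ((qPInf q (q ^ 2) ^ 3 + qPInf (-q) (q ^ 2) ^ 3) / 2)) := by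
  refine (hasSum_thetaCubeTerm_even hq0 hq).prod_fiberwise fun n ↦ ?_
  have hp0 : q ^ 2 ≠ 0 := pow_ne_zero 2 hq0
  have heuler (x : ℂ) := hasSum_pow_sq_mul_pow_div_qP (norm_sq_lt_one hq) x
  have hfib := (hasSum_mul_prod (heuler ((q ^ 2) ^ (2 * n + 1)))
    (heuler ((q ^ 2) ^ (-2 * n)))).mul_left ((q ^ 2) ^ (2 * n ^ 2))
  rw [← zpow_add_one₀ hp0, ← zpow_add_one₀ hp0, add_assoc, one_add_one_eq_two,
    neg_mul 2 n, neg_add_eq_sub] at hfib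
  exact hfib.congr_fun fun x ↦ (thetaCubeTerm_shift hq0 n x.1 x.2).trans (by rw [neg_mul 2 n])

/-- The general term of `T0`. -/
noncomputable def T0Term (p : ℂ) (n : ℕ) : ℂ :=
  qP (-p ^ 2) (p ^ 2) n / qP (-p) (p ^ 2) (n + 1) * p ^ ((n + 1) * (n + 2))

/-- The eighth order mock theta function `T₀` of Gordon and McIntosh, the partner of `S₀`. -/
noncomputable def T0 (p : ℂ) : ℂ := ∑' n, T0Term p n

lemma qPInf_neg_mul_qPInf_neg_sq (hp : ‖p‖ < 1) :
    qPInf (-p) (p ^ 2) * qPInf (-p ^ 2) (p ^ 2) = qPInf (-p) p := by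
  rw [← qPInf_sq_mul_qPInf_mul_sq (-p) hp, neg_mul, ← sq]

lemma bilateralTerm_natCast (hp0 : p ≠ 0) (hp : ‖p‖ < 1) (n : ℕ) :
    bilateralTerm p n =
      qPInf (-p) p * (p ^ n ^ 2 * qP (-p) (p ^ 2) n / qP (-p ^ 2) (p ^ 2) n) := by
  have hp2 := norm_sq_lt_one hp
  have hne : qP (-p ^ 2) (p ^ 2) n ≠ 0 := qP_ne_zero ((norm_neg _).trans_lt hp2) hp2 n
  have hreflect := qPInf_neg_mul_zpow_mul_pow_sq hp0 hp one_ne_zero n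
  simp only [one_mul, inv_one, one_pow] at hreflect
  have hpow : p ^ (2 * (n : ℤ) ^ 2) = p ^ n ^ 2 * p ^ n ^ 2 := by
    rw [two_mul, zpow_add₀ hp0]
    norm_cast
  have harg : -p ^ (2 * (n : ℤ) + 2) = -p ^ 2 * (p ^ 2) ^ n := by
    rw [zpow_add₀ hp0, zpow_mul]
    norm_cast
    ring
  rw [bilateralTerm, hpow, harg, ← qPInf_neg_mul_qPInf_neg_sq hp, qPInf_eq_qP_mul (-p ^ 2) hp2 n]
  field_simp
  linear_combination qPInf (-(p ^ 2 * (p ^ 2) ^ n)) (p ^ 2) * hreflect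

lemma bilateralTerm_neg_add_one (hp0 : p ≠ 0) (hp : ‖p‖ < 1) (n : ℕ) :
    bilateralTerm p (-(n + 1)) = 2 * qPInf (-p) p * T0Term p n := by
  have hp2 := norm_sq_lt_one hp
  have hne : qP (-p) (p ^ 2) (n + 1) ≠ 0 := qP_ne_zero ((norm_neg _).trans_lt hp) hp2 (n + 1)
  have hreflect := qPInf_neg_mul_zpow_mul_pow_sq hp0 hp (inv_ne_zero hp0) n
  rw [inv_inv, ← sq, inv_mul_cancel₀ hp0, qPInf_eq_one_sub_mul (-1) hp2, neg_one_mul, inv_pow,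
    ← zpow_neg_one p, ← zpow_add₀ hp0] at hreflect
  have hpow : p ^ (2 * (-(n + 1) : ℤ) ^ 2) = p ^ n ^ 2 * p ^ n * p ^ ((n + 1) * (n + 2)) := by
    simp only [← zpow_natCast, ← zpow_add₀ hp0]
    congr 1
    push_cast
    ring
  have hleft : 2 * (-(n + 1) : ℤ) + 2 = -1 + (1 - 2 * n) := by ring
  have hright : -p ^ (1 - 2 * (-(n + 1) : ℤ)) = -p * (p ^ 2) ^ (n + 1) := by
    rw [← pow_mul, neg_mul, ← pow_succ', ← zpow_natCast]
    congr 2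
    push_cast
    ring
  rw [bilateralTerm, T0Term, hpow, hleft, hright, ← qPInf_neg_mul_qPInf_neg_sq hp,
    qPInf_eq_qP_mul (-p) hp2 (n + 1)]
  field_simp at hreflect ⊢
  linear_combination qPInf (-(p * (p ^ 2) ^ (n + 1))) (p ^ 2) * hreflect

lemma S0_add_two_mul_T0 (hq0 : q ≠ 0) (hq : ‖q‖ < 1) :
    S0 (q ^ 2) + 2 * T0 (q ^ 2) =
      qPInf (q ^ 2) (q ^ 2) * (qPInf q (q ^ 2) ^ 3 + qPInf (-q) (q ^ 2) ^ 3) /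
        (2 * qPInf (-q ^ 2) (q ^ 2)) := by
  have hp0 : q ^ 2 ≠ 0 := pow_ne_zero 2 hq0
  have hp := norm_sq_lt_one hq
  have hne : qPInf (-q ^ 2) (q ^ 2) ≠ 0 := qPInf_ne_zero ((norm_neg _).trans_lt hp) hp
  have hsum := hasSum_bilateralTerm hq0 hq
  have hnat := hsum.summable.comp_injective (i := fun n : ℕ ↦ (n : ℤ)) Nat.cast_injective
  have hneg := hsum.summable.comp_injective (i := fun n : ℕ ↦ -((n : ℤ) + 1))
    fun a b hab ↦ by simpa using hab
  have hsplit := hsum.unique (hnat.hasSum.of_nat_of_neg_add_one hneg.hasSum)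
  simp only [Function.comp_def, bilateralTerm_natCast hp0 hp, bilateralTerm_neg_add_one hp0 hp,
    tsum_mul_left] at hsplit
  rw [S0, T0, eq_div_iff (mul_ne_zero two_ne_zero hne)]
  linear_combination -2 * hsplit

end BilateralSeries

section GeometricDecay

variable {E : Type*} [NormedAddCommGroup E] {N : ℕ} {r : ℝ}

lemma summable_pow_div_mul_mod (hN : 0 < N) (hr0 : 0 ≤ r) (hr : r < 1) (c : ℕ → ℝ) :
    Summable fun n : ℕ ↦ r ^ (n / N) * c (n % N) := by
  have : NeZero N := ⟨hN.ne'⟩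
  have hprod : Summable fun x : ℕ × Fin N ↦ r ^ x.1 * c x.2 :=
    summable_mul_of_summable_norm (f := (r ^ ·)) (g := fun b : Fin N ↦ c b)
      (summable_geometric_of_lt_one hr0 hr).norm Summable.of_finite
  simpa only [Function.comp_def, Nat.divModEquiv, Equiv.coe_fn_mk, Fin.val_ofNat] using
    (Nat.divModEquiv N).summable_iff.2 hprod

lemma norm_le_pow_div_mul_norm_mod {u : ℕ → E} (hr0 : 0 ≤ r)
    (hu : ∀ n, ‖u (n + N)‖ ≤ r * ‖u n‖) (n : ℕ) : ‖u n‖ ≤ r ^ (n / N) * ‖u (n % N)‖ := by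
  have hiter (b m : ℕ) : ‖u (b + m * N)‖ ≤ r ^ m * ‖u b‖ := by
    induction m with
    | zero => simp
    | succ m ih =>
      calc ‖u (b + (m + 1) * N)‖ = ‖u (b + m * N + N)‖ := by rw [add_one_mul, add_assoc]
        _ ≤ r * (r ^ m * ‖u b‖) := (hu _).trans (by gcongr)
        _ = r ^ (m + 1) * ‖u b‖ := by ring
  simpa only [Nat.mod_add_div'] using hiter (n % N) (n / N)

lemma tendsto_tsum_of_norm_add_le_mul {α : Type*} {l : Filter α} [CompleteSpace E]
    {f : α → ℕ → E} {g : ℕ → E} (hN : 0 < N) (hr0 : 0 ≤ r) (hr : r < 1)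
    (hfg : ∀ n, Tendsto (f · n) l (𝓝 (g n))) (hf : ∀ᶠ a in l, ∀ n, ‖f a (n + N)‖ ≤ r * ‖f a n‖) :
    Tendsto (fun a ↦ ∑' n, f a n) l (𝓝 (∑' n, g n)) := by
  refine tendsto_tsum_of_dominated_convergence
    (summable_pow_div_mul_mod hN hr0 hr fun n ↦ ‖g n‖ + 1) hfg ?_
  have hinit : ∀ᶠ a in l, ∀ b ∈ Finset.range N, ‖f a b‖ ≤ ‖g b‖ + 1 :=
    (eventually_all_finset _).2 fun b _ ↦ (hfg b).norm.eventually_le_const (lt_add_one _)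
  filter_upwards [hf, hinit] with a ha hb n
  refine (norm_le_pow_div_mul_norm_mod hr0 ha n).trans ?_
  gcongr
  exact hb _ (Finset.mem_range.2 (n.mod_lt hN))

end GeometricDecay

section Spokes

variable {N : ℕ} {z : ℂ}

/-- For `N ≠ 0`, the union of the radii of the closed unit disc that end at the `N`-th roots of
unity. -/
def spokes (N : ℕ) : Set ℂ := {z | z ^ N ∈ Complex.ofReal '' Set.Icc 0 1}

lemma isCompact_spokes (hN : N ≠ 0) : IsCompact (spokes N) := by
  refine Metric.isCompact_of_isClosed_isBounded
    ((isCompact_Icc.image Complex.continuous_ofReal).isClosed.preimage (continuous_pow N))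
    (Metric.isBounded_closedBall.subset (t := Metric.closedBall 0 1) fun z hz ↦ ?_)
  obtain ⟨Y, ⟨hY0, hY1⟩, hY⟩ := hz
  rwa [mem_closedBall_zero_iff, ← pow_le_one_iff_of_nonneg (norm_nonneg z) hN, ← norm_pow, ← hY,
    Complex.norm_of_nonneg hY0]

lemma sq_pow_mem_spokes (hz : z ∈ spokes (2 * N)) (n : ℕ) : (z ^ 2) ^ n ∈ spokes N := by
  obtain ⟨Y, hY, hzY⟩ := hz
  refine ⟨Y ^ n, ⟨pow_nonneg hY.1 n, pow_le_one₀ hY.1 hY.2⟩, ?_⟩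
  rw [Complex.ofReal_pow, hzY]
  ring

lemma ofReal_mul_mem_spokes {t : ℝ} (ht0 : 0 ≤ t) (ht1 : t ≤ 1) (hz : z ^ N = 1) :
    (t : ℂ) * z ∈ spokes N :=
  ⟨t ^ N, ⟨pow_nonneg ht0 N, pow_le_one₀ ht0 ht1⟩, by rw [mul_pow, hz, mul_one, Complex.ofReal_pow]⟩

end Spokes

section RadialLimit

variable {k : ℕ} {ξ : ℂ}

/-- The factor `T0Term p (n + N) / T0Term p n` as a function of `p` and `z = p ^ (2 * n)`. -/
noncomputable def T0Ratio (N : ℕ) (p z : ℂ) : ℂ :=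
  z ^ N * p ^ (N ^ 2 + 3 * N) * (qP (-(p ^ 2 * z)) (p ^ 2) N / qP (-(p ^ 3 * z)) (p ^ 2) N)

lemma T0Term_add (p : ℂ) (n N : ℕ) :
    T0Term p (n + N) = T0Ratio N p ((p ^ 2) ^ n) * T0Term p n := by
  have hden : -p * (p ^ 2) ^ (n + 1) = -(p ^ 3 * (p ^ 2) ^ n) := by ring
  rw [T0Term, T0Term, T0Ratio, qP_add, add_right_comm n N, qP_add, neg_mul (p ^ 2), hden,
    ← div_mul_div_comm]
  ring

lemma pow_two_mul_eq_neg_one (hk : 0 < k) (hξ : IsPrimitiveRoot ξ (4 * k)) : ξ ^ (2 * k) = -1 :=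
  (hξ.pow (b := 2) (by omega) (by ring)).eq_neg_one_of_two_right

lemma isPrimitiveRoot_sq (hk : 0 < k) (hξ : IsPrimitiveRoot ξ (4 * k)) :
    IsPrimitiveRoot (ξ ^ 2) (2 * k) :=
  hξ.pow (by omega) (by ring)

lemma qP_neg_ne_zero (hξ : IsPrimitiveRoot ξ (4 * k)) (n : ℕ) : qP (-ξ) (ξ ^ 2) n ≠ 0 := by
  refine Finset.prod_ne_zero_iff.2 fun i _ hi ↦ ?_
  have hodd : ξ ^ (2 * i + 1) = -1 := by linear_combination hi
  have hone : ξ ^ (2 * (2 * i + 1)) = 1 := by rw [pow_mul', hodd, neg_one_sq]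
  have hdvd := (Dvd.intro k rfl : 4 ∣ 4 * k).trans (hξ.dvd_of_pow_eq_one _ hone)
  omega

lemma T0Term_eq_zero (hk : 0 < k) (hξ : IsPrimitiveRoot ξ (4 * k)) {n : ℕ} (hn : k ≤ n) :
    T0Term ξ n = 0 := by
  obtain ⟨j, rfl⟩ := Nat.exists_eq_add_of_lt hk
  have hfactor : 1 - -ξ ^ 2 * (ξ ^ 2) ^ j = 0 := by
    linear_combination pow_two_mul_eq_neg_one hk hξ
  have hnum : qP (-ξ ^ 2) (ξ ^ 2) n = 0 :=
    Finset.prod_eq_zero (Finset.mem_range.2 (by omega)) hfactor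
  rw [T0Term, hnum, zero_div, zero_mul]

lemma T0_eq_sum (hk : 0 < k) (hξ : IsPrimitiveRoot ξ (4 * k)) :
    T0 ξ = ∑ n ∈ Finset.range k, T0Term ξ n :=
  tsum_eq_sum fun _ hn ↦ T0Term_eq_zero hk hξ (not_lt.1 (Finset.mem_range.not.1 hn))

lemma continuousAt_T0Term (hξ : IsPrimitiveRoot ξ (4 * k)) (n : ℕ) :
    ContinuousAt (fun p ↦ T0Term p n) ξ := by
  have hcont {a : ℂ → ℂ} (ha : Continuous a) (m : ℕ) : Continuous fun p ↦ qP (a p) (p ^ 2) m :=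
    (continuous_qP m).comp (ha.prodMk (continuous_pow 2))
  exact ((hcont (by fun_prop) n).continuousAt.div (hcont continuous_neg (n + 1)).continuousAt
    (qP_neg_ne_zero hξ (n + 1))).mul (by fun_prop)

lemma qP_neg_sq_mul (hk : 0 < k) (hξ : IsPrimitiveRoot ξ (4 * k)) (z : ℂ) :
    qP (-(ξ ^ 2 * z)) (ξ ^ 2) (2 * k) = 1 - z ^ (2 * k) := by
  rw [qP_eq_one_sub_pow (by omega) (isPrimitiveRoot_sq hk hξ), (even_two_mul k).neg_pow, mul_pow,
    (isPrimitiveRoot_sq hk hξ).pow_eq_one, one_mul]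

lemma qP_neg_cube_mul (hk : 0 < k) (hξ : IsPrimitiveRoot ξ (4 * k)) (z : ℂ) :
    qP (-(ξ ^ 3 * z)) (ξ ^ 2) (2 * k) = 1 + z ^ (2 * k) := by
  rw [qP_eq_one_sub_pow (by omega) (isPrimitiveRoot_sq hk hξ), (even_two_mul k).neg_pow, mul_pow,
    pow_right_comm, pow_two_mul_eq_neg_one hk hξ]
  ring

lemma norm_T0Ratio_lt_half (hk : 0 < k) (hξ : IsPrimitiveRoot ξ (4 * k)) {z : ℂ}
    (hz : z ∈ spokes (2 * k)) : ‖T0Ratio (2 * k) ξ z‖ < 1 / 2 := by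
  obtain ⟨Y, ⟨hY0, hY1⟩, hY⟩ := hz
  have hnorm : ‖T0Ratio (2 * k) ξ z‖ = Y * ((1 - Y) / (1 + Y)) := by
    rw [T0Ratio, qP_neg_sq_mul hk hξ, qP_neg_cube_mul hk hξ, ← hY, norm_mul, norm_mul, norm_pow,
      hξ.norm'_eq_one (by omega), one_pow, mul_one, ← Complex.ofReal_one, ← Complex.ofReal_sub,
      ← Complex.ofReal_add, norm_div, Complex.norm_of_nonneg hY0,
      Complex.norm_of_nonneg (sub_nonneg.2 hY1), Complex.norm_of_nonneg (by positivity)]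
  rw [hnorm, ← mul_div_assoc, div_lt_iff₀ (by positivity)]
  nlinarith [sq_nonneg (Y - 1 / 2)]

lemma continuousAt_T0Ratio (hk : 0 < k) (hξ : IsPrimitiveRoot ξ (4 * k)) {z : ℂ}
    (hz : z ∈ spokes (2 * k)) :
    ContinuousAt (fun x : ℂ × ℂ ↦ T0Ratio (2 * k) x.1 x.2) (ξ, z) := by
  have hcont {a : ℂ × ℂ → ℂ} (ha : Continuous a) :
      Continuous fun x ↦ qP (a x) (x.1 ^ 2) (2 * k) :=
    (continuous_qP (2 * k)).comp (ha.prodMk (continuous_fst.pow 2))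
  have hden : qP (-(ξ ^ 3 * z)) (ξ ^ 2) (2 * k) ≠ 0 := by
    obtain ⟨Y, ⟨hY0, -⟩, hY⟩ := hz
    rw [qP_neg_cube_mul hk hξ, ← hY]
    exact_mod_cast (by positivity : 1 + Y ≠ 0)
  exact ContinuousAt.mul (by fun_prop)
    ((hcont (by fun_prop)).continuousAt.div (hcont (by fun_prop)).continuousAt hden)

lemma eventually_norm_T0Ratio_lt_half (hk : 0 < k) (hξ : IsPrimitiveRoot ξ (4 * k)) :
    ∀ᶠ p in 𝓝 ξ, ∀ z ∈ spokes (2 * k), ‖T0Ratio (2 * k) p z‖ < 1 / 2 :=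
  (isCompact_spokes (by omega)).eventually_forall_of_forall_eventually fun _ hz ↦
    (continuousAt_T0Ratio hk hξ hz).norm.eventually_lt_const (norm_T0Ratio_lt_half hk hξ hz)

lemma continuousWithinAt_T0 (hk : 0 < k) (hξ : IsPrimitiveRoot ξ (4 * k)) :
    ContinuousWithinAt T0 (spokes (4 * k)) ξ := by
  refine tendsto_tsum_of_norm_add_le_mul (N := 2 * k) (by omega) one_half_pos.le one_half_lt_one
    (fun n ↦ (continuousAt_T0Term hξ n).continuousWithinAt) ?_
  filter_upwards [nhdsWithin_le_nhds (eventually_norm_T0Ratio_lt_half hk hξ),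
    self_mem_nhdsWithin] with p hp hmem n
  rw [T0Term_add, norm_mul]
  gcongr
  exact (hp _ (sq_pow_mem_spokes (by rwa [← mul_assoc]) n)).le

lemma tendsto_ofReal_mul_sq {N : ℕ} {ζ : ℂ} (hζ : ζ ^ (2 * N) = 1) :
    Tendsto (fun t : ℝ ↦ ((t : ℂ) * ζ) ^ 2) (𝓝[Set.Ioo 0 1] 1) (𝓝[spokes N] (ζ ^ 2)) := by
  refine tendsto_nhdsWithin_iff.2 ⟨?_, ?_⟩
  · have hcont : Continuous fun t : ℝ ↦ ((t : ℂ) * ζ) ^ 2 := by fun_prop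
    simpa using (hcont.tendsto 1).mono_left nhdsWithin_le_nhds
  · filter_upwards [self_mem_nhdsWithin] with t ht
    simpa only [pow_one] using sq_pow_mem_spokes (ofReal_mul_mem_spokes ht.1.le ht.2.le hζ) 1

lemma T0Term_sq (ζ : ℂ) (n : ℕ) :
    T0Term (ζ ^ 2) n = (∏ j ∈ Finset.range n, (1 + ζ ^ (4 * j + 4))) /
      (∏ j ∈ Finset.range (n + 1), (1 + ζ ^ (4 * j + 2))) * ζ ^ (2 * n ^ 2 + 6 * n + 4) := by
  have hnum (j : ℕ) : 1 - -(ζ ^ 2) ^ 2 * ((ζ ^ 2) ^ 2) ^ j = 1 + ζ ^ (4 * j + 4) := by ring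
  have hden (j : ℕ) : 1 - -ζ ^ 2 * ((ζ ^ 2) ^ 2) ^ j = 1 + ζ ^ (4 * j + 2) := by ring
  simp only [T0Term, qP, hnum, hden]
  ring

end RadialLimit

theorem stmt19 (k : ℕ) (hk : 0 < k) (ζ : ℂ) (hζ : IsPrimitiveRoot ζ (8 * k)) :
    Tendsto (fun t : ℝ =>
        S0 (((t : ℂ) * ζ) ^ 2) -
          qPInf (((t : ℂ) * ζ) ^ 2) (((t : ℂ) * ζ) ^ 2) *
              (qPInf ((t : ℂ) * ζ) (((t : ℂ) * ζ) ^ 2) ^ 3 +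
                qPInf (-((t : ℂ) * ζ)) (((t : ℂ) * ζ) ^ 2) ^ 3) /
            (2 * qPInf (-((t : ℂ) * ζ) ^ 2) (((t : ℂ) * ζ) ^ 2)))
      (nhdsWithin 1 (Set.Ioo (0 : ℝ) 1))
      (nhds (-2 * ∑ n ∈ Finset.range k,
          (∏ j ∈ Finset.range n, (1 + ζ ^ (4 * j + 4))) /
            (∏ j ∈ Finset.range (n + 1), (1 + ζ ^ (4 * j + 2))) * ζ ^ (2 * n ^ 2 + 6 * n + 4))) := by
  have hξ : IsPrimitiveRoot (ζ ^ 2) (4 * k) := hζ.pow (by omega) (by ring)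
  have hradial : Tendsto (fun t : ℝ ↦ ((t : ℂ) * ζ) ^ 2) (𝓝[Set.Ioo 0 1] 1)
      (𝓝[spokes (4 * k)] (ζ ^ 2)) :=
    tendsto_ofReal_mul_sq (by rw [← mul_assoc]; exact hζ.pow_eq_one)
  have hT0 := (continuousWithinAt_T0 hk hξ).tendsto.comp hradial
  simp only [T0_eq_sum hk hξ, T0Term_sq] at hT0
  refine (hT0.const_mul (-2)).congr' ?_
  filter_upwards [self_mem_nhdsWithin] with t ht
  have hq0 : (t : ℂ) * ζ ≠ 0 :=
    mul_ne_zero (Complex.ofReal_ne_zero.2 ht.1.ne') (hζ.ne_zero (by omega))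
  have hq : ‖(t : ℂ) * ζ‖ < 1 := by
    rw [norm_mul, hζ.norm'_eq_one (by omega), mul_one, Complex.norm_of_nonneg ht.1.le]
    exact ht.2
  rw [← S0_add_two_mul_T0 hq0 hq, Function.comp_apply]
  ring
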